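/- Let $p$ be an odd prime and write $\sigma_1\sigma_2 = (1\,2\,\ldots\,p)(\bar1\,\ldots\,\bar p)(1^*\,2^*\,\ldots\,p^*)(\overline{1^*}\,\ldots\,\overline{p^*})$ in $C_2\wr S_{2p}$, where $x^* = x+p$. Then the number of conjugates of the involution $f_p = (1\ 1^*)\cdots(p\ p^*)(\bar1\ \overline{1^*})\cdots(\bar p\ \overline{p^*})$ in $C_2\wr S_{2p}$ that commute with $\sigma_1\sigma_2$ is exactly $2p$. -/

import Mathlib

/-!
STATEMENT 7: Let `p` be an odd prime and, in `C₂ ≀ S_{2p}`,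
`σ₁σ₂ = (1 2 … p)(1̄ … p̄)(1* 2* … p*)(1̄* … p̄*)` (where `x* = x + p`).  Then the
number of conjugates in `C₂ ≀ S_{2p}` of the involution
`f_p = (1 1*)⋯(p p*)(1̄ 1̄*)⋯(p̄ p̄*)` that commute with `σ₁σ₂` is exactly `2p`.

We realize `C₂ ≀ S_{2p}` on `(Fin 2 × Fin p) × Bool`: the point `((j,i),ε)` is the
`i`-th point of the `j`-th block (`j = 0` the plain block, `j = 1` the starred one),
barred iff `ε = true`; `C₂ ≀ S_{2p}` is the centraliser of the bar involution,
`σ₁σ₂` rotates each block, and `f_p` swaps the two blocks.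
-/

def barPerm (α : Type*) : Equiv.Perm (α × Bool) :=
  Function.Involutive.toPerm (fun x => (x.1, !x.2)) (by intro x; simp)

/-- `σ₁σ₂`, rotating each of the two blocks of size `p`. -/
def rotBlocks (p : ℕ) : Equiv.Perm ((Fin 2 × Fin p) × Bool) :=
  Equiv.prodCongr (Equiv.prodCongr (Equiv.refl (Fin 2)) (finRotate p)) (Equiv.refl Bool)

/-- The involution `f_p`, swapping the two blocks pointwise. -/
def fp (p : ℕ) : Equiv.Perm ((Fin 2 × Fin p) × Bool) :=
  Equiv.prodCongr (Equiv.prodCongr (Equiv.swap (0 : Fin 2) 1) (Equiv.refl (Fin p)))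
    (Equiv.refl Bool)

/-!
The rotation and the bar generate `ℤ/p × C₂`, which acts simply transitively on each of the two
blocks, so a permutation commuting with both is determined by the images of one point in each block.
A conjugate of `f_p` is an involution moving every point to a different pair `{x, x̄}`. If it
preserved a block it would act at a point of it as a translation `(k, d)` with `2k = 0`, hence
`k = 0` as `p` is odd, which is excluded. So it exchanges the blocks, and being an
involution it is determined by the image of `1`. Each of the `2p` points of the starred block occurs
as this image: conjugate `f_p` by a translation of the plain block alone.
-/

theorem eq_zero_of_add_self_eq_zero_of_odd_card {G : Type*} [AddGroup G] (hG : Odd (Nat.card G))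
    {a : G} (ha : a + a = 0) : a = 0 := by
  apply hG.coprime_two_right.nsmul_right_bijective.injective
  simpa only [two_nsmul, add_zero] using ha

theorem commute_inv_mul_mul {G : Type*} [Group G] {f h c : G} (hh : Commute h c)
    (hf : Commute f c) : Commute (h⁻¹ * f * h) c :=
  (hh.inv_left.mul_left hf).mul_left hh

theorem involutive_inv_mul_mul {α : Type*} {f : Equiv.Perm α} (hf : Function.Involutive f)
    (h : Equiv.Perm α) : Function.Involutive (h⁻¹ * f * h) := by
  intro x
  simp [hf (h x)]

section Bar

variable {α : Type*}

@[simp]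
theorem barPerm_apply (x : α × Bool) : barPerm α x = (x.1, !x.2) := rfl

theorem fst_eq_fst_iff_eq_or_eq_barPerm {x y : α × Bool} :
    y.1 = x.1 ↔ y = x ∨ y = barPerm α x := by
  obtain ⟨a, d⟩ := x
  obtain ⟨b, e⟩ := y
  cases d <;> cases e <;> simp

theorem fst_apply_eq_of_commute_barPerm {h : Equiv.Perm (α × Bool)}
    (hh : Commute h (barPerm α)) {x y : α × Bool} (hxy : y.1 = x.1) : (h y).1 = (h x).1 := by
  rw [fst_eq_fst_iff_eq_or_eq_barPerm] at hxy ⊢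
  rcases hxy with rfl | rfl
  · exact Or.inl rfl
  · exact Or.inr (DFunLike.congr_fun hh.eq x)

theorem fst_inv_mul_mul_apply_ne {f h : Equiv.Perm (α × Bool)} (hh : Commute h (barPerm α))
    (hf : ∀ x, (f x).1 ≠ x.1) (x : α × Bool) : ((h⁻¹ * f * h) x).1 ≠ x.1 := by
  intro hx
  apply hf (h x)
  simpa using fst_apply_eq_of_commute_barPerm hh hx

end Bar

section Swap

variable {p : ℕ}

@[simp]
theorem fp_apply (x : (Fin 2 × Fin p) × Bool) :
    fp p x = ((Equiv.swap 0 1 x.1.1, x.1.2), x.2) := rfl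

theorem involutive_fp : Function.Involutive (fp p) := by
  intro x
  simp

theorem commute_fp_barPerm : Commute (fp p) (barPerm (Fin 2 × Fin p)) := rfl

theorem commute_fp_rotBlocks : Commute (fp p) (rotBlocks p) := rfl

theorem fst_fp_apply_ne (x : (Fin 2 × Fin p) × Bool) : (fp p x).1 ≠ x.1 := by
  obtain ⟨⟨j, i⟩, e⟩ := x
  fin_cases j <;> simp

end Swap

section Translation

variable {p : ℕ} [NeZero p]

@[simp]
theorem rotBlocks_apply (x : (Fin 2 × Fin p) × Bool) :
    rotBlocks p x = ((x.1.1, x.1.2 + 1), x.2) := by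
  rw [← finRotate_apply]
  rfl

/-- The action of `(k, d) ∈ ℤ/p × C₂` on the points: both blocks are rotated by `k` steps, and all
points are replaced by their bars if `d = true`. -/
def translation (k : Fin p) (d : Bool) : Equiv.Perm ((Fin 2 × Fin p) × Bool) where
  toFun x := ((x.1.1, x.1.2 + k), xor x.2 d)
  invFun x := ((x.1.1, x.1.2 - k), xor x.2 d)
  left_inv x := by simp
  right_inv x := by simp

@[simp]
theorem translation_apply (k : Fin p) (d : Bool) (x : (Fin 2 × Fin p) × Bool) :
    translation k d x = ((x.1.1, x.1.2 + k), xor x.2 d) := rfl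

open Fin.NatCast in
theorem rotBlocks_pow_apply (n : ℕ) (x : (Fin 2 × Fin p) × Bool) :
    (rotBlocks p ^ n) x = ((x.1.1, x.1.2 + n), x.2) := by
  induction n with
  | zero => simp
  | succ n ih => simp [pow_succ', ih, add_assoc]

theorem translation_eq_rotBlocks_pow_mul_barPerm_pow (k : Fin p) (d : Bool) :
    translation k d = rotBlocks p ^ (k : ℕ) * barPerm (Fin 2 × Fin p) ^ d.toNat := by
  ext1 x
  cases d <;> simp [rotBlocks_pow_apply]

theorem commute_translation {g : Equiv.Perm ((Fin 2 × Fin p) × Bool)}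
    (hrot : Commute g (rotBlocks p)) (hbar : Commute g (barPerm (Fin 2 × Fin p)))
    (k : Fin p) (d : Bool) : Commute g (translation k d) := by
  rw [translation_eq_rotBlocks_pow_mul_barPerm_pow]
  exact (hrot.pow_right _).mul_right (hbar.pow_right _)

theorem exists_translation_apply_eq {x y : (Fin 2 × Fin p) × Bool} (hxy : y.1.1 = x.1.1) :
    ∃ k d, translation k d x = y :=
  ⟨y.1.2 - x.1.2, xor x.2 y.2, by simp [← hxy]⟩

theorem eq_of_involutive_of_commute_translation {g g' : Equiv.Perm ((Fin 2 × Fin p) × Bool)}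
    (hinv : Function.Involutive g) (hinv' : Function.Involutive g')
    (hcomm : ∀ k d, Commute g (translation k d)) (hcomm' : ∀ k d, Commute g' (translation k d))
    {x : (Fin 2 × Fin p) × Bool} (hx : g x = g' x) (hblock : (g x).1.1 ≠ x.1.1) : g = g' := by
  have agree_on_block {z} (hz : g z = g' z) {y} (hy : y.1.1 = z.1.1) : g y = g' y := by
    obtain ⟨k, d, rfl⟩ := exists_translation_apply_eq hy
    calc g (translation k d z)
      _ = translation k d (g z) := DFunLike.congr_fun (hcomm k d).eq z
      _ = translation k d (g' z) := by rw [hz]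
      _ = g' (translation k d z) := (DFunLike.congr_fun (hcomm' k d).eq z).symm
  have agree_at_image : g (g x) = g' (g x) := by rw [hinv x, hx, hinv' x]
  ext1 y
  obtain hy | hy : y.1.1 = x.1.1 ∨ y.1.1 = (g x).1.1 := by omega
  · exact agree_on_block hx hy
  · exact agree_on_block agree_at_image hy

theorem fst_fst_apply_ne_of_odd (hodd : Odd p) {g : Equiv.Perm ((Fin 2 × Fin p) × Bool)}
    (hinv : Function.Involutive g) (hcomm : ∀ k d, Commute g (translation k d))
    (hne : ∀ x, (g x).1 ≠ x.1) (x : (Fin 2 × Fin p) × Bool) : (g x).1.1 ≠ x.1.1 := by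
  intro hx
  obtain ⟨k, d, hkd⟩ := exists_translation_apply_eq hx
  have translation_twice : translation k d (translation k d x) = x :=
    calc translation k d (translation k d x)
      _ = translation k d (g x) := by rw [hkd]
      _ = g (translation k d x) := (DFunLike.congr_fun (hcomm k d).eq x).symm
      _ = x := by rw [hkd, hinv x]
  have two_k : k + k = 0 := by
    simpa [add_assoc] using congrArg (fun y => y.1.2) translation_twice
  have k_eq_zero : k = 0 :=
    eq_zero_of_add_self_eq_zero_of_odd_card (by simpa using hodd) two_k
  apply hne x
  simp [← hkd, k_eq_zero]

end Translation

section TwistedSwap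

variable {p : ℕ} [NeZero p]

/-- The element of `C₂ ≀ S_{2p}` that translates the plain block by `(k, d)` and fixes the starred
block pointwise, used to conjugate `f_p`. -/
def plainTwist (k : Fin p) (d : Bool) : Equiv.Perm ((Fin 2 × Fin p) × Bool) where
  toFun x := if x.1.1 = 0 then translation k d x else x
  invFun x := if x.1.1 = 0 then translation (-k) d x else x
  left_inv := by
    rintro ⟨⟨j, i⟩, e⟩
    fin_cases j <;> simp
  right_inv := by
    rintro ⟨⟨j, i⟩, e⟩
    fin_cases j <;> simp

theorem plainTwist_apply (k : Fin p) (d : Bool) (x : (Fin 2 × Fin p) × Bool) :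
    plainTwist k d x = if x.1.1 = 0 then translation k d x else x := rfl

theorem commute_plainTwist_barPerm (k : Fin p) (d : Bool) :
    Commute (plainTwist k d) (barPerm (Fin 2 × Fin p)) := by
  ext1 ⟨⟨j, i⟩, e⟩
  fin_cases j <;> simp [plainTwist_apply]

theorem commute_plainTwist_rotBlocks (k : Fin p) (d : Bool) :
    Commute (plainTwist k d) (rotBlocks p) := by
  ext1 ⟨⟨j, i⟩, e⟩
  fin_cases j <;> simp [plainTwist_apply, add_right_comm]

/-- The conjugate of `f_p` that exchanges the blocks and sends the first plain point to the
`k`-th starred point (counting from `0`), barred if `d = true`. -/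
def twistedSwap (k : Fin p) (d : Bool) : Equiv.Perm ((Fin 2 × Fin p) × Bool) :=
  (plainTwist k d)⁻¹ * fp p * plainTwist k d

theorem twistedSwap_apply_zero (k : Fin p) (d : Bool) :
    twistedSwap k d ((0, 0), false) = ((1, k), d) := by
  rw [twistedSwap, Equiv.Perm.mul_apply, Equiv.Perm.mul_apply, Equiv.Perm.inv_eq_iff_eq]
  simp [plainTwist_apply]

theorem involutive_twistedSwap (k : Fin p) (d : Bool) : Function.Involutive (twistedSwap k d) :=
  involutive_inv_mul_mul involutive_fp _

theorem commute_twistedSwap_barPerm (k : Fin p) (d : Bool) :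
    Commute (twistedSwap k d) (barPerm (Fin 2 × Fin p)) :=
  commute_inv_mul_mul (commute_plainTwist_barPerm k d) commute_fp_barPerm

theorem commute_twistedSwap_rotBlocks (k : Fin p) (d : Bool) :
    Commute (twistedSwap k d) (rotBlocks p) :=
  commute_inv_mul_mul (commute_plainTwist_rotBlocks k d) commute_fp_rotBlocks

theorem twistedSwap_injective :
    Function.Injective fun x : Fin p × Bool => twistedSwap x.1 x.2 := by
  intro x y hxy
  simpa [twistedSwap_apply_zero, Prod.ext_iff] using DFunLike.congr_fun hxy ((0, 0), false)

theorem exists_twistedSwap_eq (hodd : Odd p) {g h : Equiv.Perm ((Fin 2 × Fin p) × Bool)}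
    (hh : Commute h (barPerm (Fin 2 × Fin p))) (hg : g = h⁻¹ * fp p * h)
    (hrot : Commute g (rotBlocks p)) : ∃ k d, twistedSwap k d = g := by
  have hinv : Function.Involutive g := hg ▸ involutive_inv_mul_mul involutive_fp h
  have hcomm : ∀ k d, Commute g (translation k d) :=
    commute_translation hrot (hg ▸ commute_inv_mul_mul hh commute_fp_barPerm)
  have hne : ∀ x, (g x).1 ≠ x.1 := hg ▸ fst_inv_mul_mul_apply_ne hh fst_fp_apply_ne
  obtain ⟨⟨⟨j, k⟩, d⟩, hz⟩ : ∃ z, g ((0, 0), false) = z := ⟨_, rfl⟩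
  have hj : j ≠ 0 := by
    simpa [hz] using fst_fst_apply_ne_of_odd hodd hinv hcomm hne ((0, 0), false)
  obtain rfl : j = 1 := by omega
  refine ⟨k, d, eq_of_involutive_of_commute_translation (x := ((0, 0), false))
    (involutive_twistedSwap k d) hinv
    (commute_translation (commute_twistedSwap_rotBlocks k d) (commute_twistedSwap_barPerm k d))
    hcomm ?_ ?_⟩
  · rw [twistedSwap_apply_zero, hz]
  · simp [twistedSwap_apply_zero]

theorem conj_fp_and_commute_iff_mem_range (hodd : Odd p)
    (g : Equiv.Perm ((Fin 2 × Fin p) × Bool)) :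
    ((∃ h ∈ Subgroup.centralizer {barPerm (Fin 2 × Fin p)}, g = h⁻¹ * fp p * h) ∧
      Commute g (rotBlocks p)) ↔
    g ∈ Set.range fun x : Fin p × Bool => twistedSwap x.1 x.2 := by
  simp only [Subgroup.mem_centralizer_singleton_iff]
  constructor
  · rintro ⟨⟨h, hh, hg⟩, hrot⟩
    obtain ⟨k, d, hkd⟩ := exists_twistedSwap_eq hodd hh hg hrot
    exact ⟨(k, d), hkd⟩
  · rintro ⟨⟨k, d⟩, rfl⟩
    exact ⟨⟨plainTwist k d, commute_plainTwist_barPerm k d, rfl⟩,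
      commute_twistedSwap_rotBlocks k d⟩

end TwistedSwap

theorem card_fixed_conjugates_general (p : ℕ) (hodd : Odd p) :
    Nat.card {g : Equiv.Perm ((Fin 2 × Fin p) × Bool) //
        (∃ h ∈ Subgroup.centralizer {barPerm (Fin 2 × Fin p)}, g = h⁻¹ * fp p * h) ∧
        Commute g (rotBlocks p)} = 2 * p := by
  have : NeZero p := ⟨hodd.pos.ne'⟩
  calc Nat.card {g : Equiv.Perm ((Fin 2 × Fin p) × Bool) // _}
    _ = Nat.card (Set.range fun x : Fin p × Bool => twistedSwap x.1 x.2) :=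
      Nat.card_congr (Equiv.subtypeEquivRight (conj_fp_and_commute_iff_mem_range hodd))
    _ = Nat.card (Fin p × Bool) := Nat.card_range_of_injective twistedSwap_injective
    _ = 2 * p := by simp [mul_comm]

/-- The number of conjugates of `f_p` in `C₂ ≀ S_{2p}` commuting with `σ₁σ₂` is `2p`. -/
theorem card_fixed_conjugates (p : ℕ) (hp : p.Prime) (hodd : Odd p) :
    Nat.card {g : Equiv.Perm ((Fin 2 × Fin p) × Bool) //
        (∃ h ∈ Subgroup.centralizer {barPerm (Fin 2 × Fin p)}, g = h⁻¹ * fp p * h) ∧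
        Commute g (rotBlocks p)} = 2 * p :=
  card_fixed_conjugates_general p hodd
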